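/- Let L ≥ 2, α ∈ {x, z}, and 1 ≤ j < j+r ≤ L. The Kennedy–Tasaki transformation maps the string-order operator to a ferromagnetic two-point operator: U_KT ( −S^α_j · exp(iπ Σ_{k=j+1}^{j+r−1} S^α_k) · S^α_{j+r} ) U_KT = S^α_j S^α_{j+r}. -/

import Mathlib

noncomputable section
open Complex Matrix

/-- The Hilbert space operators of the `L`-site spin-1 chain: matrices on `(ℂ³)^{⊗L}`,
with the tensor factors indexed by sites and the single-site ordered basis `(|+⟩,|0⟩,|−⟩)`. -/
abbrev Op (L : ℕ) : Type := Matrix (Fin L → Fin 3) (Fin L → Fin 3) ℂ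

/-- The spin-1 matrix `Sˣ`. -/
def Sx : Matrix (Fin 3) (Fin 3) ℂ :=
  ((Real.sqrt 2 : ℝ) : ℂ)⁻¹ • !![0, 1, 0; 1, 0, 1; 0, 1, 0]

/-- The spin-1 matrix `Sʸ`. -/
def Sy : Matrix (Fin 3) (Fin 3) ℂ :=
  ((Real.sqrt 2 : ℝ) : ℂ)⁻¹ • !![0, -I, 0; I, 0, -I; 0, I, 0]

/-- The spin-1 matrix `Sᶻ = diag(1,0,−1)`. -/
def Sz : Matrix (Fin 3) (Fin 3) ℂ := !![1, 0, 0; 0, 0, 0; 0, 0, -1]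

/-- `site A j` is the one-site operator `A` acting on site `j` and identity elsewhere. -/
def site {L : ℕ} (A : Matrix (Fin 3) (Fin 3) ℂ) (j : Fin L) : Op L :=
  Matrix.of fun f g => ∏ k : Fin L, if k = j then A (f k) (g k) else (if f k = g k then 1 else 0)

/-- One factor `exp(iπ Sᶻ_u Sˣ_v)` of the Kennedy–Tasaki transformation. -/
def ktFactor {L : ℕ} (u v : Fin L) : Op L :=
  NormedSpace.exp (((Real.pi : ℂ) * I) • (site Sz u * site Sx v))

/-- The Kennedy–Tasaki transformation `U_KT = ∏_{1 ≤ u < v ≤ L} exp(iπ Sᶻ_u Sˣ_v)`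
(the factors pairwise commute, so the ordering is immaterial). -/
def UKT (L : ℕ) : Op L :=
  ((List.finRange L).map fun u =>
    ((List.finRange L).map fun v => if u < v then ktFactor u v else 1).prod).prod

/-- The p-wave basis vector `|↑⟩ = (|+⟩ − |−⟩)/√2`. -/
def up : Fin 3 → ℂ := ![((Real.sqrt 2 : ℝ) : ℂ)⁻¹, 0, -((Real.sqrt 2 : ℝ) : ℂ)⁻¹]

/-- The p-wave basis vector `|↓⟩ = |0⟩`. -/
def down : Fin 3 → ℂ := ![0, 1, 0]

/-- The p-wave basis vector `|h⟩ = (|+⟩ + |−⟩)/√2`. -/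
def hole : Fin 3 → ℂ := ![((Real.sqrt 2 : ℝ) : ℂ)⁻¹, 0, ((Real.sqrt 2 : ℝ) : ℂ)⁻¹]

/-- The rank-one operator `|a⟩⟨b|`. -/
def ketbra (a b : Fin 3 → ℂ) : Matrix (Fin 3) (Fin 3) ℂ := Matrix.vecMulVec a (star b)

/-- `σˣ = |↑⟩⟨↓| + |↓⟩⟨↑|` (annihilating `|h⟩`). -/
def sigx : Matrix (Fin 3) (Fin 3) ℂ := ketbra up down + ketbra down up

/-- `σʸ = −i|↑⟩⟨↓| + i|↓⟩⟨↑|` (annihilating `|h⟩`). -/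
def sigy : Matrix (Fin 3) (Fin 3) ℂ := (-I) • ketbra up down + I • ketbra down up

/-- `σᶻ = |↑⟩⟨↑| − |↓⟩⟨↓|` (annihilating `|h⟩`). -/
def sigz : Matrix (Fin 3) (Fin 3) ℂ := ketbra up up - ketbra down down

/-- `n = |↑⟩⟨↑| + |↓⟩⟨↓|` (annihilating `|h⟩`). -/
def nMat : Matrix (Fin 3) (Fin 3) ℂ := ketbra up up + ketbra down down

/-- `h = |h⟩⟨h|`. -/
def hMat : Matrix (Fin 3) (Fin 3) ℂ := ketbra hole hole

/-- `P = ⊗_{j=1}^L n_j`, the orthogonal projection onto the hole-free subspace. -/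
def Pproj (L : ℕ) : Op L := Matrix.of fun f g => ∏ k : Fin L, nMat (f k) (g k)

/-- The Heisenberg coupling `S_j · S_k`. -/
def heis {L : ℕ} (j k : Fin L) : Op L :=
  site Sx j * site Sx k + site Sy j * site Sy k + site Sz j * site Sz k

/-- The bilinear-biquadratic Hamiltonian
`H_BLBQ(θ) = Σ_{j=1}^{L−1} [cosθ (S_j·S_{j+1}) + sinθ (S_j·S_{j+1})²]`. -/
def HBLBQ (L : ℕ) (θ : ℝ) : Op L :=
  ∑ j : Fin L, if h : (j : ℕ) + 1 < L then
    ((Real.cos θ : ℝ) : ℂ) • heis j ⟨(j : ℕ) + 1, h⟩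
      + ((Real.sin θ : ℝ) : ℂ) • (heis j ⟨(j : ℕ) + 1, h⟩) ^ 2
  else 0

/-- The self-dual Hamiltonian `H_SD(θ) = H_BLBQ(θ) + U_KT H_BLBQ(θ) U_KT`. -/
def HSD (L : ℕ) (θ : ℝ) : Op L := HBLBQ L θ + UKT L * HBLBQ L θ * UKT L

/-- The spin-1/2 XXZ Hamiltonian written in the p-wave basis:
`H_XXZ(θ) = (cosθ−sinθ) Σ_j (−σˣ_jσˣ_{j+1} + σʸ_jσʸ_{j+1}) + sinθ Σ_j σᶻ_jσᶻ_{j+1}`. -/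
def HXXZ (L : ℕ) (θ : ℝ) : Op L :=
  ((Real.cos θ - Real.sin θ : ℝ) : ℂ) •
    (∑ j : Fin L, if h : (j : ℕ) + 1 < L then
      -(site sigx j * site sigx ⟨(j : ℕ) + 1, h⟩) + site sigy j * site sigy ⟨(j : ℕ) + 1, h⟩
    else 0)
  + ((Real.sin θ : ℝ) : ℂ) •
    (∑ j : Fin L, if h : (j : ℕ) + 1 < L then
      site sigz j * site sigz ⟨(j : ℕ) + 1, h⟩
    else 0)

/-- The global product `∏_{j=1}^L exp(c • A_j)` of commuting single-site exponentials. -/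
def globalProd (L : ℕ) (A : Matrix (Fin 3) (Fin 3) ℂ) (c : ℂ) : Op L :=
  ((List.finRange L).map fun j => NormedSpace.exp (c • site A j)).prod

/-- The symmetry flux `F^y_j = exp(−iπ Σ_{k<j} Sʸ_k) · Sʸ_j`. -/
def fluxY (L : ℕ) (j : Fin L) : Op L :=
  NormedSpace.exp ((-((Real.pi : ℂ) * I)) •
    ∑ k : Fin L, if (k : ℕ) < (j : ℕ) then site Sy k else 0) * site Sy j



/-- Tensor product of one-site operators. -/
def tp {L : ℕ} : (Fin L → Matrix (Fin 3) (Fin 3) ℂ) →* Op L where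
  toFun A := Matrix.of fun f g => ∏ k : Fin L, A k (f k) (g k)
  map_one' := by
    ext f g
    simp only [Matrix.of_apply, Pi.one_apply, Matrix.one_apply]
    rw [Finset.prod_ite_zero]
    simp [funext_iff]
  map_mul' A B := by
    ext f g
    simp only [Matrix.of_apply, Pi.mul_apply, Matrix.mul_apply]
    rw [Finset.prod_univ_sum]
    simp [Fintype.piFinset_univ, Finset.prod_mul_distrib]

lemma site_eq {L : ℕ} (A : Matrix (Fin 3) (Fin 3) ℂ) (j : Fin L) :
    site A j = tp (Pi.mulSingle j A) := by
  ext f g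
  simp only [site, tp, Matrix.of_apply, MonoidHom.coe_mk, OneHom.coe_mk]
  refine Finset.prod_congr rfl fun k _ => ?_
  by_cases h : k = j
  · subst h; simp
  · simp [h, Matrix.one_apply]

lemma site_mul {L : ℕ} (A B : Matrix (Fin 3) (Fin 3) ℂ) (j : Fin L) :
    site A j * site B j = site (A * B) j := by
  simp only [site_eq, ← map_mul, Pi.mulSingle_mul]

lemma site_one {L : ℕ} (j : Fin L) : site 1 j = 1 := by
  simp [site_eq]

lemma site_sub {L : ℕ} (A B : Matrix (Fin 3) (Fin 3) ℂ) (j : Fin L) :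
    site (A - B) j = site A j - site B j := by
  ext f g
  simp only [site, Matrix.of_apply, Matrix.sub_apply]
  rw [← Finset.mul_prod_erase _ _ (Finset.mem_univ j), ← Finset.mul_prod_erase _ _ (Finset.mem_univ j),
    ← Finset.mul_prod_erase _ _ (Finset.mem_univ j)]
  have h : ∀ C : Matrix (Fin 3) (Fin 3) ℂ,
      (∏ k ∈ Finset.univ.erase j, if k = j then C (f k) (g k) else (if f k = g k then 1 else 0))
      = ∏ k ∈ Finset.univ.erase j, (if f k = g k then (1:ℂ) else 0) := fun C =>
    Finset.prod_congr rfl fun k hk => by rw [if_neg (Finset.ne_of_mem_erase hk)]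
  have h1 := h A
  have h2 := h B
  have h3 := h (A - B)
  simp only [Matrix.sub_apply] at h3
  rw [h1, h2, h3]
  simp [sub_mul]

lemma tp_commute {L : ℕ} {A B : Fin L → Matrix (Fin 3) (Fin 3) ℂ}
    (h : ∀ k, Commute (A k) (B k)) : Commute (tp A) (tp B) := by
  have : Commute A B := funext fun k => h k
  exact this.map tp

lemma ms_commute {L : ℕ} {A B : Matrix (Fin 3) (Fin 3) ℂ} (h : Commute A B) (i : Fin L)
    (k : Fin L) (P : Prop) [Decidable P] :
    Commute ((Pi.mulSingle i A : Fin L → Matrix (Fin 3) (Fin 3) ℂ) k) (if P then B else 1) := by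
  by_cases hk : k = i
  · subst hk; split_ifs <;> simp [h]
  · simp [hk]

lemma site_commute {L : ℕ} {A B : Matrix (Fin 3) (Fin 3) ℂ} (h : Commute A B) (i k : Fin L) :
    Commute (site A i) (site B k) := by
  rw [site_eq, site_eq]
  refine tp_commute fun l => ?_
  by_cases hi : l = i
  · subst hi
    by_cases hk : l = k
    · subst hk; simpa using h
    · simp [hk]
  · simp [hi]

lemma site_commute_ne {L : ℕ} (A B : Matrix (Fin 3) (Fin 3) ℂ) {i k : Fin L} (h : i ≠ k) :
    Commute (site A i) (site B k) := by
  rw [site_eq, site_eq]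
  refine tp_commute fun l => ?_
  by_cases hi : l = i
  · subst hi
    simp [h]
  · simp [hi]

section exps
variable {n : Type*} [Fintype n] [DecidableEq n]

lemma exp_idem (P : Matrix n n ℂ) (hP : P * P = P) (t : ℂ) :
    NormedSpace.exp (t • P) = 1 + (Complex.exp t - 1) • P := by
  letI : NormedRing (Matrix n n ℂ) := Matrix.linftyOpNormedRing
  letI : NormedAlgebra ℂ (Matrix n n ℂ) := Matrix.linftyOpNormedAlgebra
  have hpow : ∀ k : ℕ, P ^ (k + 1) = P := by
    intro k
    induction k with
    | zero => simp
    | succ k ih => rw [pow_succ, ih, hP]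
  have h1 : HasSum (fun k : ℕ => ((k.factorial : ℂ)⁻¹) • (t • P) ^ k) (NormedSpace.exp (t • P)) :=
    NormedSpace.exp_series_hasSum_exp' (𝕂 := ℂ) (t • P)
  have h2 : HasSum (fun k : ℕ => ((k.factorial : ℂ)⁻¹) • t ^ k) (Complex.exp t) := by
    rw [Complex.exp_eq_exp_ℂ]
    exact NormedSpace.exp_series_hasSum_exp' (𝕂 := ℂ) t
  have h3 := (hasSum_nat_add_iff' 1).mpr h1
  have h4 := ((hasSum_nat_add_iff' 1).mpr h2).smul_const P
  have h5 : (fun k : ℕ => (((k+1).factorial : ℂ)⁻¹) • (t • P) ^ (k+1))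
      = fun k : ℕ => ((((k+1).factorial : ℂ)⁻¹) • t ^ (k+1)) • P := by
    funext k
    rw [smul_pow, hpow, smul_smul, smul_eq_mul]
  rw [h5] at h3
  have h6 := h3.unique h4
  simp at h6
  rw [← h6]; abel

lemma exp_cube (M : Matrix n n ℂ) (hM : M * M * M = M) :
    NormedSpace.exp (((Real.pi : ℂ) * I) • M) = 1 - (2:ℂ) • (M * M) := by
  have h4 : M * M * (M * M) = M * M := by rw [← mul_assoc, hM]
  have h3' : M * (M * M) = M := by rw [← mul_assoc, hM]
  set P : Matrix n n ℂ := (1/2 : ℂ) • (M * M + M) with hPd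
  set Q : Matrix n n ℂ := (1/2 : ℂ) • (M * M - M) with hQd
  have hP : P * P = P := by
    simp only [hPd, smul_mul_smul_comm, mul_add, add_mul, h4, h3', hM]
    module
  have hQ : Q * Q = Q := by
    simp only [hQd, smul_mul_smul_comm, mul_sub, sub_mul, h4, h3', hM]
    module
  have hPQ : P * Q = 0 := by
    simp only [hPd, hQd, smul_mul_smul_comm, mul_sub, add_mul, h4, h3', hM]
    module
  have hQP : Q * P = 0 := by
    simp only [hPd, hQd, smul_mul_smul_comm, mul_add, sub_mul, h4, h3', hM]
    module
  have hM' : ((Real.pi : ℂ) * I) • M = ((Real.pi : ℂ) * I) • P + (-((Real.pi : ℂ) * I)) • Q := by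
    simp only [hPd, hQd]; module
  have hc : Commute (((Real.pi : ℂ) * I) • P) ((-((Real.pi : ℂ) * I)) • Q) := by
    refine Commute.smul_left (Commute.smul_right ?_ _) _
    rw [commute_iff_eq, hPQ, hQP]
  rw [hM', Matrix.exp_add_of_commute _ _ hc, exp_idem P hP, exp_idem Q hQ, Complex.exp_neg,
    Complex.exp_pi_mul_I]
  simp only [mul_add, add_mul, smul_mul_smul_comm, hPQ, one_mul, mul_one]
  simp only [hPd, hQd]
  norm_num
  module
end exps

lemma sq2 : (((Real.sqrt 2 : ℝ) : ℂ)⁻¹) * (((Real.sqrt 2 : ℝ) : ℂ)⁻¹) = 1/2 := by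
  rw [← mul_inv, ← Complex.ofReal_mul, Real.mul_self_sqrt (by norm_num)]; norm_num

lemma SxSx : Sx * Sx = !![1/2, 0, 1/2; 0, 1, 0; 1/2, 0, 1/2] := by
  rw [Sx, smul_mul_smul_comm, sq2]
  ext i j; fin_cases i <;> fin_cases j <;> simp [Matrix.mul_apply, Fin.sum_univ_three] <;> norm_num
lemma SzSz : Sz * Sz = !![1, 0, 0; 0, 0, 0; 0, 0, 1] := by
  rw [Sz]
  ext i j; fin_cases i <;> fin_cases j <;> simp [Matrix.mul_apply, Fin.sum_univ_three]
lemma Sx3 : Sx * Sx * Sx = Sx := by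
  rw [SxSx, Sx]
  ext i j; fin_cases i <;> fin_cases j <;> simp [Matrix.mul_apply, Fin.sum_univ_three] <;> ring
lemma Sz3 : Sz * Sz * Sz = Sz := by
  rw [SzSz, Sz]
  ext i j; fin_cases i <;> fin_cases j <;> simp [Matrix.mul_apply, Fin.sum_univ_three]
lemma ab_comm : Commute (Sz * Sz) (Sx * Sx) := by
  rw [commute_iff_eq, SxSx, SzSz]
  ext i j; fin_cases i <;> fin_cases j <;> simp [Matrix.mul_apply, Fin.sum_univ_three]
lemma aX : Sz * Sz * Sx = Sx - Sx * (Sz * Sz) := by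
  rw [SzSz, Sx]
  ext i j; fin_cases i <;> fin_cases j <;> simp [Matrix.mul_apply, Fin.sum_univ_three]
lemma bZ : Sx * Sx * Sz = Sz - Sz * (Sx * Sx) := by
  rw [SxSx, Sz]
  ext i j; fin_cases i <;> fin_cases j <;> simp [Matrix.mul_apply, Fin.sum_univ_three] <;> norm_num

/-- flip -/
def fl (A : Matrix (Fin 3) (Fin 3) ℂ) : Matrix (Fin 3) (Fin 3) ℂ := 1 - (A * A + A * A)

lemma fl_sq {A : Matrix (Fin 3) (Fin 3) ℂ} (h : A * A * A = A) : fl A * fl A = 1 := by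
  have h4 : A * A * (A * A) = A * A := by rw [← mul_assoc, h]
  simp only [fl, mul_sub, sub_mul, mul_add, add_mul, h4, mul_one, one_mul]; abel

lemma fl_mul {A : Matrix (Fin 3) (Fin 3) ℂ} (h : A * A * A = A) : fl A * A = -A := by
  simp only [fl, sub_mul, add_mul, h, one_mul]; abel

lemma mul_fl {A : Matrix (Fin 3) (Fin 3) ℂ} (h : A * A * A = A) : A * fl A = -A := by
  have h4 : A * (A * A) = A := by rw [← mul_assoc, h]
  simp only [fl, mul_sub, mul_add, h4, mul_one]; abel

lemma fl_comm {A B : Matrix (Fin 3) (Fin 3) ℂ} (h : Commute (A * A) B) : Commute (fl A) B := by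
  unfold fl
  exact (Commute.one_left B).sub_left (h.add_left h)

lemma site_fl {L : ℕ} (A : Matrix (Fin 3) (Fin 3) ℂ) (k : Fin L) :
    site (fl A) k = 1 - (site (A * A) k + site (A * A) k) := by
  have : fl A = 1 - A * A - A * A := by unfold fl; abel
  rw [this, site_sub, site_sub, site_one]; abel

lemma exp_site {L : ℕ} (A : Matrix (Fin 3) (Fin 3) ℂ) (h : A * A * A = A) (k : Fin L) :
    NormedSpace.exp (((Real.pi : ℂ) * I) • site A k) = site (fl A) k := by
  rw [exp_cube _ (by rw [site_mul, site_mul, h]), site_fl, site_mul, two_smul]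

lemma ktFactor_eq {L : ℕ} {u v : Fin L} (h : u ≠ v) :
    ktFactor u v = 1 - (site (Sz * Sz) u * site (Sx * Sx) v + site (Sz * Sz) u * site (Sx * Sx) v) := by
  have hc := site_commute_ne Sz Sx h
  have h2 : site Sz u * site Sx v * (site Sz u * site Sx v)
      = site (Sz * Sz) u * site (Sx * Sx) v := by
    rw [hc.symm.mul_mul_mul_comm, site_mul, site_mul]
  unfold ktFactor
  rw [exp_cube, h2, two_smul]
  rw [h2, (site_commute_ne Sz (Sx * Sx) h).symm.mul_mul_mul_comm, site_mul, site_mul, Sx3, Sz3]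

/-- Guarded factor. -/
def kf {L : ℕ} (u v : Fin L) : Op L := if u < v then ktFactor u v else 1

lemma kf_comm {L : ℕ} {B : Op L} (ha : ∀ u, Commute (site (Sz * Sz) u) B)
    (hb : ∀ u, Commute (site (Sx * Sx) u) B) (u v : Fin L) : Commute (kf u v) B := by
  unfold kf
  split_ifs with h
  · rw [ktFactor_eq h.ne]
    have := (ha u).mul_left (hb v)
    exact (Commute.one_left B).sub_left (this.add_left this)
  · exact Commute.one_left B

lemma kf_comm_a {L : ℕ} (u v k : Fin L) : Commute (kf u v) (site (Sz * Sz) k) :=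
  kf_comm (fun _ => site_commute (Commute.refl _) _ _) (fun _ => site_commute ab_comm.symm _ _) u v

lemma kf_comm_b {L : ℕ} (u v k : Fin L) : Commute (kf u v) (site (Sx * Sx) k) :=
  kf_comm (fun _ => site_commute ab_comm _ _) (fun _ => site_commute (Commute.refl _) _ _) u v

lemma kf_kf {L : ℕ} (u v u' v' : Fin L) : Commute (kf u v) (kf u' v') :=
  kf_comm (fun _ => (kf_comm_a _ _ _).symm) (fun _ => (kf_comm_b _ _ _).symm) u v

lemma kf_sq {L : ℕ} (u v : Fin L) : kf u v * kf u v = 1 := by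
  unfold kf
  split_ifs with h
  · rw [ktFactor_eq h.ne]
    have h2 : site (Sz * Sz) u * site (Sx * Sx) v * (site (Sz * Sz) u * site (Sx * Sx) v)
      = site (Sz * Sz) u * site (Sx * Sx) v := by
      rw [(site_commute_ne (Sz * Sz) (Sx * Sx) h.ne).symm.mul_mul_mul_comm, site_mul, site_mul,
        ← mul_assoc, Sz3, ← mul_assoc, Sx3]
    simp only [mul_sub, sub_mul, mul_add, add_mul, h2, mul_one, one_mul]; abel
  · simp

lemma UKT_eq (L : ℕ) : UKT L = ((List.finRange L).map fun u =>
    ((List.finRange L).map fun v => kf u v).prod).prod := rfl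

section lists
variable {M ι : Type*} [Monoid M]

lemma list_comm (l : List ι) (f : ι → M) (B : M) (h : ∀ i, Commute (f i) B) :
    Commute (l.map f).prod B := by
  refine Commute.list_prod_left _ _ fun x hx => ?_
  obtain ⟨i, _, rfl⟩ := List.mem_map.mp hx
  exact h i

lemma list_sq (l : List ι) (f : ι → M) (hc : ∀ i k, Commute (f i) (f k))
    (h : ∀ i, f i * f i = 1) : (l.map f).prod * (l.map f).prod = 1 := by
  induction l with
  | nil => simp
  | cons a l ih =>
    simp only [List.map_cons, List.prod_cons]
    rw [(list_comm l f (f a) fun i => hc i a).mul_mul_mul_comm, h, ih, one_mul]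

lemma list_conj (l : List ι) (f g : ι → M) (X : M) (hc : ∀ i k, Commute (f i) (g k))
    (h : ∀ i, f i * X = X * g i * f i) :
    (l.map f).prod * X = X * (l.map g).prod * (l.map f).prod := by
  induction l with
  | nil => simp
  | cons a l ih =>
    simp only [List.map_cons, List.prod_cons]
    have hx := (list_comm l g (f a) fun i => (hc a i).symm)
    calc f a * (l.map f).prod * X = f a * X * ((l.map g).prod * (l.map f).prod) := by
          rw [mul_assoc, ih]; simp only [mul_assoc]
      _ = X * g a * (f a * (l.map g).prod) * (l.map f).prod := by rw [h]; simp only [mul_assoc]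
      _ = _ := by rw [← hx.eq]; simp only [mul_assoc]

lemma list_ite [DecidableEq ι] (l : List ι) (hl : l.Nodup) (j : ι) (c : ι → M) :
    (l.map fun v => if v = j then c v else 1).prod = if j ∈ l then c j else 1 := by
  induction l with
  | nil => simp
  | cons a l ih =>
    rw [List.nodup_cons] at hl
    simp only [List.map_cons, List.prod_cons, ih hl.2, List.mem_cons]
    by_cases h : a = j
    · subst h; simp [hl.1]
    · simp [h, Ne.symm h]
end lists

lemma fin_ite {M : Type*} [Monoid M] {L : ℕ} (j : Fin L) (c : Fin L → M) :
    ((List.finRange L).map fun v => if v = j then c v else 1).prod = c j := by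
  rw [list_ite _ (List.nodup_finRange L)]; simp

lemma fin_site {L : ℕ} (p : Fin L → Prop) [DecidablePred p] (S : Matrix (Fin 3) (Fin 3) ℂ) :
    ((List.finRange L).map fun v => if p v then site S v else 1).prod
      = tp (fun v => if p v then S else 1) := by
  have h : (fun v : Fin L => if p v then site S v else 1)
      = tp ∘ fun v => Pi.mulSingle v (if p v then S else 1) := by
    funext v
    by_cases hv : p v <;> simp [hv, site_eq]
  rw [h, ← List.map_map, ← map_list_prod]
  congr 1
  funext w
  rw [Pi.list_prod_apply, List.map_map]
  have h' : ((fun f : Fin L → Matrix (Fin 3) (Fin 3) ℂ => f w) ∘ fun v =>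
      (Pi.mulSingle v (if p v then S else 1) : Fin L → Matrix (Fin 3) (Fin 3) ℂ))
      = fun v => if v = w then (if p v then S else 1) else 1 := by
    funext v
    by_cases hv : v = w
    · subst hv; simp
    · simp [hv, Ne.symm hv]
  rw [h', fin_ite]

lemma UKT_sq (L : ℕ) : UKT L * UKT L = 1 := by
  rw [UKT_eq]
  refine list_sq _ _ (fun u u' => ?_) fun u => ?_
  · exact list_comm _ _ _ fun v => (list_comm _ _ _ fun v' => kf_kf _ _ _ _).symm
  · exact list_sq _ _ (fun _ _ => kf_kf _ _ _ _) fun v => kf_sq _ _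

lemma UKT_comm {L : ℕ} {B : Op L} (h : ∀ u v, Commute (kf u v) B) : Commute (UKT L) B := by
  rw [UKT_eq]
  exact list_comm _ _ _ fun u => list_comm _ _ _ fun v => h u v

lemma UKT_conj {L : ℕ} (X : Op L) (g : Fin L → Fin L → Op L)
    (hc : ∀ u v u' v', Commute (kf u v) (g u' v'))
    (h : ∀ u v, kf u v * X = X * g u v * kf u v) :
    UKT L * X = X * ((List.finRange L).map fun u =>
      ((List.finRange L).map fun v => g u v).prod).prod * UKT L := by
  rw [UKT_eq]
  refine list_conj _ _ _ _ (fun u u' => ?_) fun u => ?_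
  · exact list_comm _ _ _ fun v => (list_comm _ _ _ fun v' => (hc _ _ _ _).symm).symm
  · exact list_conj _ _ _ _ (fun _ _ => hc _ _ _ _) fun v => h _ _

lemma kf_flx {L : ℕ} (u v k : Fin L) : Commute (kf u v) (site (fl Sx) k) :=
  kf_comm (fun _ => site_commute (fl_comm ab_comm.symm).symm _ _)
    (fun _ => site_commute (fl_comm (Commute.refl _)).symm _ _) u v

lemma kf_flz {L : ℕ} (u v k : Fin L) : Commute (kf u v) (site (fl Sz) k) :=
  kf_comm (fun _ => site_commute (fl_comm (Commute.refl _)).symm _ _)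
    (fun _ => site_commute (fl_comm ab_comm).symm _ _) u v

/-- Pure ring identity. -/
lemma ring_conj {R : Type*} [Ring R] (X a b : R) (hb : b * b = b) (hab : a * b = b * a)
    (hbX : b * X = X * b) (haX : a * X = X - X * a) :
    (1 - (a * b + a * b)) * X = X * (1 - (b + b)) * (1 - (a * b + a * b)) := by
  have h1 : a * b * X = X * b - X * (a * b) := by
    rw [mul_assoc, hbX, ← mul_assoc, haX, sub_mul, mul_assoc]
  have h2 : b * (a * b) = a * b := by rw [← mul_assoc, ← hab, mul_assoc, hb]
  simp only [sub_mul, add_mul, mul_sub, mul_add, one_mul, mul_one, h1, mul_assoc X b, h2]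
  abel

lemma xx (A : Matrix (Fin 3) (Fin 3) ℂ) : Commute (A * A) A :=
  (Commute.refl A).mul_left (Commute.refl A)

lemma UKT_Sx {L : ℕ} (j : Fin L) :
    UKT L * site Sx j = site Sx j * tp (fun v => if j < v then fl Sx else 1) * UKT L := by
  rw [UKT_conj (site Sx j) (fun u v => if u = j then (if u < v then site (fl Sx) v else 1) else 1)]
  · congr 2
    rw [← fin_site]
    rw [← fin_ite j (fun u : Fin L =>
      ((List.finRange L).map fun v => if u < v then site (fl Sx) v else 1).prod)]
    congr 2
    funext u
    split_ifs <;> simp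
  · intro u v u' v'
    split_ifs
    · exact kf_flx _ _ _
    · exact Commute.one_right _
    · exact Commute.one_right _
  · intro u v
    by_cases huv : u < v
    · by_cases hu : u = j
      · subst hu
        simp only [kf, huv, if_true, ktFactor_eq huv.ne, site_fl]
        refine ring_conj _ _ _ ?_ (site_commute ab_comm _ _) (site_commute (xx Sx) _ _) ?_
        · rw [site_mul, ← mul_assoc, Sx3]
        · rw [site_mul, aX, site_sub, site_mul]
      · simp only [hu, if_false, mul_one]
        simp only [kf, huv, if_true, ktFactor_eq huv.ne]
        have := (site_commute_ne (Sz * Sz) Sx hu).mul_left (site_commute (xx Sx) v j)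
        exact (Commute.one_left _).sub_left (this.add_left this)
    · simp [kf, huv]

lemma UKT_Sz {L : ℕ} (j : Fin L) :
    UKT L * site Sz j = site Sz j * tp (fun v => if v < j then fl Sz else 1) * UKT L := by
  rw [UKT_conj (site Sz j) (fun u v => if v = j then (if u < v then site (fl Sz) u else 1) else 1)]
  · congr 2
    rw [← fin_site]
    congr 2
    funext u
    rw [fin_ite j (fun v : Fin L => if u < v then site (fl Sz) u else 1)]
  · intro u v u' v'
    split_ifs
    · exact kf_flz _ _ _
    · exact Commute.one_right _
    · exact Commute.one_right _
  · intro u v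
    by_cases huv : u < v
    · by_cases hu : v = j
      · subst hu
        have hc := (site_commute (L := L) ab_comm u v).eq
        simp only [kf, huv, if_true, ktFactor_eq huv.ne, site_fl, hc]
        refine ring_conj _ _ _ ?_ hc.symm (site_commute (xx Sz) _ _) ?_
        · rw [site_mul, ← mul_assoc, Sz3]
        · rw [site_mul, bZ, site_sub, site_mul]
      · simp only [hu, if_false, mul_one]
        simp only [kf, huv, if_true, ktFactor_eq huv.ne]
        have := (site_commute (xx Sz) u j).mul_left (site_commute_ne (Sx * Sx) Sz hu)
        exact (Commute.one_left _).sub_left (this.add_left this)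
    · simp [kf, huv]

lemma exp_sum_site {L : ℕ} (A : Matrix (Fin 3) (Fin 3) ℂ) (h : A * A * A = A)
    (s : Finset (Fin L)) :
    NormedSpace.exp (((Real.pi : ℂ) * I) • ∑ k ∈ s, site A k)
      = tp (fun v => if v ∈ s then fl A else 1) := by
  induction s using Finset.induction_on with
  | empty =>
    simp only [Finset.sum_empty, smul_zero, NormedSpace.exp_zero, Finset.notMem_empty, if_false]
    exact (map_one tp).symm
  | insert a s ha ih =>
    rw [Finset.sum_insert ha, smul_add, Matrix.exp_add_of_commute, ih, exp_site A h, site_eq,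
      ← map_mul]
    · congr 1
      funext v
      by_cases hv : v = a
      · subst hv; simp [ha]
      · simp [hv]
    · refine Commute.smul_left (Commute.smul_right ?_ _) _
      exact Commute.sum_right _ _ _ fun k _ => site_commute (Commute.refl _) _ _

lemma main_aux {L : ℕ} (A : Matrix (Fin 3) (Fin 3) ℂ) (h : A * A * A = A) (j k : Fin L)
    (hjk : j < k) (p : Fin L → Fin L → Prop) [∀ a, DecidablePred (p a)]
    (hp : (∀ a v, p a v ↔ a < v) ∨ (∀ a v, p a v ↔ v < a))
    (hU : ∀ a, UKT L * site A a = site A a * tp (fun v => if p a v then fl A else 1) * UKT L)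
    (hC : ∀ v, Commute (UKT L) (site (fl A) v)) :
    UKT L * (-(site A j * NormedSpace.exp (((Real.pi : ℂ) * I) •
      ∑ v : Fin L, if j < v ∧ v < k then site A v else 0) * site A k)) * UKT L
      = site A j * site A k := by
  rw [← Finset.sum_filter, exp_sum_site A h]
  simp only [Finset.mem_filter, Finset.mem_univ, true_and]
  set E : Op L := tp (fun v => if j < v ∧ v < k then fl A else 1) with hE
  have hUE : Commute (UKT L) E := by
    rw [hE, ← fin_site]
    refine (list_comm _ _ _ fun v => ?_).symm
    split_ifs
    · exact (hC v).symm
    · exact Commute.one_left _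
  have key : UKT L * (site A j * E * site A k) * UKT L
      = site A j * tp (fun v => if p j v then fl A else 1) * E *
        (site A k * tp (fun v => if p k v then fl A else 1)) := by
    calc _ = (UKT L * site A j) * E * site A k * UKT L := by simp only [mul_assoc]
      _ = site A j * tp (fun v => if p j v then fl A else 1) * (UKT L * E) * site A k * UKT L := by
        rw [hU]; simp only [mul_assoc]
      _ = site A j * tp (fun v => if p j v then fl A else 1) * E * (UKT L * site A k) * UKT L := by
        rw [hUE.eq]; simp only [mul_assoc]
      _ = site A j * tp (fun v => if p j v then fl A else 1) * E *
        (site A k * tp (fun v => if p k v then fl A else 1)) * (UKT L * UKT L) := by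
        rw [hU]; simp only [mul_assoc]
      _ = _ := by rw [UKT_sq, mul_one]
  rw [mul_neg, neg_mul, key, neg_eq_iff_eq_neg]
  have hneg : ∀ i : Fin L, -(site A i) = site (-A) i := by
    intro i
    have h0 : site (0 : Matrix (Fin 3) (Fin 3) ℂ) i = 0 := by
      rw [← sub_self (1 : Matrix (Fin 3) (Fin 3) ℂ), site_sub, sub_self]
    rw [← zero_sub A, site_sub, h0, zero_sub]
  rcases hp with hp | hp
  · rw [← mul_neg, hneg]
    simp only [hE, site_eq, ← map_mul]
    congr 1
    funext v
    simp only [Pi.mul_apply, hp]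
    rcases lt_trichotomy v j with hv | rfl | hv
    · simp [hv.ne, (hv.trans hjk).ne, hv.not_gt, (hv.trans hjk).not_gt]
    · simp [hjk.ne, hjk.not_gt]
    · rcases lt_trichotomy v k with hw | rfl | hw
      · simp [hv, hw, hv.ne', hw.ne, hw.not_gt, fl_sq h]
      · simp [hv, hv.ne', fl_mul h]
      · simp [hv, hw, hv.ne', hw.ne', hw.not_gt, fl_sq h]
  · rw [← neg_mul, hneg]
    simp only [hE, site_eq, ← map_mul]
    congr 1
    funext v
    simp only [Pi.mul_apply, hp]
    rcases lt_trichotomy v j with hv | rfl | hv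
    · simp [hv, hv.ne, (hv.trans hjk).ne, hv.not_gt, hv.trans hjk, fl_sq h]
    · simp [hjk, hjk.ne, mul_fl h]
    · rcases lt_trichotomy v k with hw | rfl | hw
      · simp [hv, hw, hv.ne', hw.ne, hv.not_gt, fl_sq h]
      · simp [hv.ne', hv.not_gt]
      · simp [hv.ne', hw.ne', hw.not_gt, hv.not_gt]

/-- For `α ∈ {x,z}`, the Kennedy–Tasaki transformation maps the string-order
operator `−S^α_j exp(iπ Σ_{k=j+1}^{j+r−1} S^α_k) S^α_{j+r}` to the ferromagnetic two-point
operator `S^α_j S^α_{j+r}`. -/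
theorem UKT_string_order (L : ℕ) (hL : 2 ≤ L) (A : Matrix (Fin 3) (Fin 3) ℂ)
    (hA : A = Sx ∨ A = Sz) (j r : ℕ) (hr : 0 < r) (hjr : j + r < L) :
    UKT L *
        (-(site A ⟨j, by omega⟩ *
            NormedSpace.exp (((Real.pi : ℂ) * I) •
              ∑ k : Fin L, if j < (k : ℕ) ∧ (k : ℕ) < j + r then site A k else 0) *
            site A ⟨j + r, hjr⟩)) *
        UKT L =
      site A ⟨j, by omega⟩ * site A ⟨j + r, hjr⟩ := by
  rcases hA with rfl | rfl
  · exact main_aux Sx Sx3 ⟨j, by omega⟩ ⟨j + r, hjr⟩ (by simp [Fin.lt_def, hr]) (fun a v => a < v)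
      (Or.inl fun _ _ => Iff.rfl) UKT_Sx (fun v => UKT_comm fun _ _ => kf_flx _ _ _)
  · exact main_aux Sz Sz3 ⟨j, by omega⟩ ⟨j + r, hjr⟩ (by simp [Fin.lt_def, hr]) (fun a v => v < a)
      (Or.inr fun _ _ => Iff.rfl) UKT_Sz (fun v => UKT_comm fun _ _ => kf_flz _ _ _)

end
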